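/- Let (𝔭_j)_{j∈ℕ} be nonnegative reals with Σ_{j=0}^∞ 𝔭_j ≤ 1 and 𝔭₀ = 0. For any initial state i ∈ ℕ, let μ_k^{(i)} be the distribution sequence of the boundary random walk started at i. Then for every positive integer m, Σ_{k=0}^{m−1} μ_k^{(i)}(0) ≤ e / √(1 − e^{−2/m}). -/

import Mathlib

/-- The substochastic transition matrix of a boundary random walk on ℕ with
jumping measure `p` at the boundary state `0`. -/
noncomputable def Ptrans (p : ℕ → ℝ) : ℕ → ℕ → ℝ
  | 0, j => p j
  | i + 1, j => if j = i ∨ j = i + 2 then 1 / 2 else 0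

/-- The (substochastic) distribution at time `k` of the boundary random walk
with jumping measure `p` started at `i₀`. -/
noncomputable def occ (p : ℕ → ℝ) (i₀ : ℕ) : ℕ → ℕ → ℝ
  | 0 => fun j => if j = i₀ then 1 else 0
  | k + 1 => fun j => ∑' l : ℕ, occ p i₀ k l * Ptrans p l j

/-!
For a discount `s ∈ (0, 1]` let `x` be the smaller root of `s (1 + x²) = 2 x`, so that `j ↦ x ^ j`
is fixed by `s P` away from `0`. As `𝔭₀ = 0`, a jump from `0` lands in `j ≥ 1`, where `x ^ j ≤ x`,
so at `0` an application of `s P` leaves at most `s x = 1 - √(1 - s²)`: each visit to `0` costs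
`√(1 - s²)` of the potential `x ^ j`. The potential starts at `x ^ i ≤ 1` and stays nonnegative,
hence `√(1 - s²) ∑ sᵏ μₖ(0) ≤ 1`. For `s = e^{-1/m}` the weights `sᵏ`, `k < m`, are at least `e⁻¹`.
-/

section Lyapunov

variable {ι κ : Type*}

theorem hasSum_tsum_mul_mul_of_nonneg {ν : ι → ℝ} {P : ι → κ → ℝ} {f : κ → ℝ}
    (hν : ∀ l, 0 ≤ ν l) (hP : ∀ l j, 0 ≤ P l j) (hf : ∀ j, 0 ≤ f j)
    (hPf : ∀ l, Summable fun j => P l j * f j)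
    (hνPf : Summable fun l => ν l * ∑' j, P l j * f j) :
    HasSum (fun j => (∑' l, ν l * P l j) * f j) (∑' l, ν l * ∑' j, P l j * f j) := by
  let F : ι × κ → ℝ := fun q => ν q.1 * (P q.1 q.2 * f q.2)
  have hrow (l : ι) : HasSum (fun j => F (l, j)) (ν l * ∑' j, P l j * f j) :=
    (hPf l).hasSum.mul_left (ν l)
  have hF : Summable F := by
    refine (summable_prod_of_nonneg fun q =>
      mul_nonneg (hν q.1) (mul_nonneg (hP q.1 q.2) (hf q.2))).2 ⟨fun l => (hrow l).summable, ?_⟩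
    exact hνPf.congr fun l => (hrow l).tsum_eq.symm
  have hsum : ∑' q, F q = ∑' l, ν l * ∑' j, P l j * f j :=
    (hF.hasSum.prod_fiberwise hrow).tsum_eq.symm
  have hcol (j : κ) : HasSum (fun l => F (l, j)) ((∑' l, ν l * P l j) * f j) := by
    have hj := (hF.prod_symm.prod_factor j).hasSum
    simpa only [F, Prod.swap, ← mul_assoc, tsum_mul_right] using hj
  exact hsum ▸ ((Equiv.prodComm κ ι).hasSum_iff.2 hF.hasSum).prod_fiberwise hcol

/-- A Foster–Lyapunov function for the kernel `P` with discount factor `s` and running cost `c`: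
the discounted expectation of `f` after one step drops below `f` by at least the cost. Summability
is a field so that `∑'` is the actual expectation. -/
structure IsLyapunov (P : ι → ι → ℝ) (s : ℝ) (c f : ι → ℝ) : Prop where
  cost_nonneg : ∀ l, 0 ≤ c l
  nonneg : ∀ l, 0 ≤ f l
  summable : ∀ l, Summable fun j => P l j * f j
  drift : ∀ l, s * ∑' j, P l j * f j + c l ≤ f l

namespace IsLyapunov

variable {P : ι → ι → ℝ} {s : ℝ} {c f : ι → ℝ}

theorem expectation_nonneg (h : IsLyapunov P s c f) (hP : ∀ l j, 0 ≤ P l j) (l : ι) :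
    0 ≤ ∑' j, P l j * f j :=
  tsum_nonneg fun j => mul_nonneg (hP l j) (h.nonneg j)

section Step

variable {ν : ι → ℝ}

theorem summable_mul_expectation (h : IsLyapunov P s c f) (hs : 0 < s) (hP : ∀ l j, 0 ≤ P l j)
    (hν : ∀ l, 0 ≤ ν l) (hνf : Summable fun l => ν l * f l) :
    Summable fun l => ν l * ∑' j, P l j * f j := by
  have hPf_le (l : ι) : ∑' j, P l j * f j ≤ f l / s := by
    rw [le_div_iff₀' hs]
    linarith [h.drift l, h.cost_nonneg l]
  refine Summable.of_nonneg_of_le (fun l => mul_nonneg (hν l) (h.expectation_nonneg hP l))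
    (fun l => ?_) (hνf.div_const s)
  simpa only [mul_div_assoc] using mul_le_mul_of_nonneg_left (hPf_le l) (hν l)

theorem summable_mul_cost (h : IsLyapunov P s c f) (hs : 0 ≤ s) (hP : ∀ l j, 0 ≤ P l j)
    (hν : ∀ l, 0 ≤ ν l) (hνf : Summable fun l => ν l * f l) :
    Summable fun l => ν l * c l := by
  have hc_le (l : ι) : c l ≤ f l := by
    linarith [h.drift l, mul_nonneg hs (h.expectation_nonneg hP l)]
  exact Summable.of_nonneg_of_le (fun l => mul_nonneg (hν l) (h.cost_nonneg l))
    (fun l => mul_le_mul_of_nonneg_left (hc_le l) (hν l)) hνf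

theorem summable_step (h : IsLyapunov P s c f) (hs : 0 < s) (hP : ∀ l j, 0 ≤ P l j)
    (hν : ∀ l, 0 ≤ ν l) (hνf : Summable fun l => ν l * f l) :
    Summable fun j => (∑' l, ν l * P l j) * f j :=
  (hasSum_tsum_mul_mul_of_nonneg hν hP h.nonneg h.summable
    (h.summable_mul_expectation hs hP hν hνf)).summable

theorem tsum_step_add_tsum_cost_le (h : IsLyapunov P s c f) (hs : 0 < s)
    (hP : ∀ l j, 0 ≤ P l j) (hν : ∀ l, 0 ≤ ν l) (hνf : Summable fun l => ν l * f l) :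
    s * ∑' j, (∑' l, ν l * P l j) * f j + ∑' l, ν l * c l ≤ ∑' l, ν l * f l := by
  have hνPf := h.summable_mul_expectation hs hP hν hνf
  have hνc := h.summable_mul_cost hs.le hP hν hνf
  rw [(hasSum_tsum_mul_mul_of_nonneg hν hP h.nonneg h.summable hνPf).tsum_eq, ← tsum_mul_left,
    ← (hνPf.mul_left s).tsum_add hνc]
  refine ((hνPf.mul_left s).add hνc).tsum_le_tsum (fun l => ?_) hνf
  calc s * (ν l * ∑' j, P l j * f j) + ν l * c l
      = ν l * (s * ∑' j, P l j * f j + c l) := by ring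
    _ ≤ ν l * f l := mul_le_mul_of_nonneg_left (h.drift l) (hν l)

end Step

variable {μ : ℕ → ι → ℝ}

theorem sum_pow_mul_tsum_cost_le (h : IsLyapunov P s c f) (hs : 0 < s)
    (hP : ∀ l j, 0 ≤ P l j) (hμ : ∀ k l, 0 ≤ μ k l)
    (hμ_succ : ∀ k j, μ (k + 1) j = ∑' l, μ k l * P l j)
    (hμf : Summable fun l => μ 0 l * f l) (n : ℕ) :
    ∑ k ∈ Finset.range n, s ^ k * ∑' l, μ k l * c l ≤ ∑' l, μ 0 l * f l := by
  have hsummable (k : ℕ) : Summable fun l => μ k l * f l := by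
    induction k with
    | zero => exact hμf
    | succ k ih => simpa only [hμ_succ] using h.summable_step hs hP (hμ k) ih
  have hstep (k : ℕ) :
      s * ∑' l, μ (k + 1) l * f l + ∑' l, μ k l * c l ≤ ∑' l, μ k l * f l := by
    simpa only [hμ_succ] using h.tsum_step_add_tsum_cost_le hs hP (hμ k) (hsummable k)
  have htelescope : ∑ k ∈ Finset.range n, s ^ k * ∑' l, μ k l * c l ≤
      ∑ k ∈ Finset.range n,
        (s ^ k * ∑' l, μ k l * f l - s ^ (k + 1) * ∑' l, μ (k + 1) l * f l) := by
    refine Finset.sum_le_sum fun k _ => ?_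
    rw [pow_succ, mul_assoc, ← mul_sub]
    exact mul_le_mul_of_nonneg_left (le_sub_iff_add_le'.2 (hstep k)) (pow_nonneg hs.le k)
  have hfinal : 0 ≤ s ^ n * ∑' l, μ n l * f l :=
    mul_nonneg (pow_nonneg hs.le n) (tsum_nonneg fun l => mul_nonneg (hμ n l) (h.nonneg l))
  rw [Finset.sum_range_sub'] at htelescope
  linarith

end IsLyapunov

end Lyapunov

/-- The smaller root of `s (1 + x²) = 2 x`, i.e. the generating function `E[sᵀ]` of the time `T`
a simple random walk takes to go from `1` to `0`. The value at `s = 0` is `0`, as it should be. -/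
noncomputable def hittingRoot (s : ℝ) : ℝ := (1 - √(1 - s ^ 2)) / s

theorem mul_hittingRoot (s : ℝ) : s * hittingRoot s = 1 - √(1 - s ^ 2) := by
  rcases eq_or_ne s 0 with rfl | hs
  · simp
  · exact mul_div_cancel₀ _ hs

theorem hittingRoot_nonneg {s : ℝ} (hs : 0 ≤ s) : 0 ≤ hittingRoot s :=
  div_nonneg (sub_nonneg.2 (Real.sqrt_le_one.2 (sub_le_self 1 (sq_nonneg s)))) hs

theorem hittingRoot_le_one {s : ℝ} (hs : 0 ≤ s) (hs1 : s ≤ 1) : hittingRoot s ≤ 1 := by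
  refine div_le_one_of_le₀ (sub_le_comm.1 (Real.le_sqrt_of_sq_le ?_)) hs
  nlinarith

theorem mul_one_add_hittingRoot_sq {s : ℝ} (hs : 0 < s) (hs1 : s ≤ 1) :
    s * (1 + hittingRoot s ^ 2) = 2 * hittingRoot s := by
  have hsqrt : √(1 - s ^ 2) ^ 2 = 1 - s ^ 2 := Real.sq_sqrt (by nlinarith)
  refine mul_left_cancel₀ hs.ne' ?_
  linear_combination (s * hittingRoot s - 1 - √(1 - s ^ 2)) * mul_hittingRoot s + hsqrt

section BoundaryWalk

variable {p : ℕ → ℝ}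

theorem Ptrans_nonneg (hp : ∀ j, 0 ≤ p j) (l j : ℕ) : 0 ≤ Ptrans p l j := by
  cases l with
  | zero => exact hp j
  | succ l => simp only [Ptrans]; positivity

theorem hasSum_Ptrans_succ_mul (p f : ℕ → ℝ) (l : ℕ) :
    HasSum (fun j => Ptrans p (l + 1) j * f j) ((f l + f (l + 2)) / 2) := by
  have hsupport : ∀ j ∉ ({l, l + 2} : Finset ℕ), Ptrans p (l + 1) j * f j = 0 := by
    intro j hj
    simp_all [Ptrans]
  have hvalue : ∑ j ∈ {l, l + 2}, Ptrans p (l + 1) j * f j = (f l + f (l + 2)) / 2 := by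
    rw [Finset.sum_pair (by omega)]
    simp only [Ptrans, true_or, or_true, if_true]
    ring
  exact hvalue ▸ hasSum_sum_of_ne_finset_zero hsupport

theorem occ_nonneg (hp : ∀ j, 0 ≤ p j) (i k j : ℕ) : 0 ≤ occ p i k j := by
  induction k generalizing j with
  | zero => simp only [occ]; positivity
  | succ k ih => exact tsum_nonneg fun l => mul_nonneg (ih l) (Ptrans_nonneg hp l j)

theorem hasSum_occ_zero_mul (p f : ℕ → ℝ) (i : ℕ) :
    HasSum (fun j => occ p i 0 j * f j) (f i) := by
  convert hasSum_ite_eq i (f i) using 2 with j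
  by_cases hj : j = i <;> simp [occ, hj]

theorem summable_mul_pow {x : ℝ} (hp : ∀ j, 0 ≤ p j) (hp_sum : Summable p) (hx : 0 ≤ x)
    (hx1 : x ≤ 1) : Summable fun j => p j * x ^ j :=
  Summable.of_nonneg_of_le (fun j => mul_nonneg (hp j) (pow_nonneg hx j))
    (fun j => mul_le_of_le_one_right (hp j) (pow_le_one₀ hx hx1)) hp_sum

theorem tsum_mul_pow_le {x : ℝ} (hp : ∀ j, 0 ≤ p j) (hp_sum : Summable p)
    (hp_le : ∑' j, p j ≤ 1) (hp_zero : p 0 = 0) (hx : 0 ≤ x) (hx1 : x ≤ 1) :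
    ∑' j, p j * x ^ j ≤ x := by
  have hterm (j : ℕ) : p j * x ^ j ≤ p j * x := by
    rcases eq_or_ne j 0 with rfl | hj
    · simp [hp_zero]
    · exact mul_le_mul_of_nonneg_left (pow_le_of_le_one hx hx1 hj) (hp j)
  calc ∑' j, p j * x ^ j
      ≤ ∑' j, p j * x :=
        (summable_mul_pow hp hp_sum hx hx1).tsum_le_tsum hterm (hp_sum.mul_right x)
    _ = (∑' j, p j) * x := tsum_mul_right
    _ ≤ x := mul_le_of_le_one_left hx hp_le

theorem isLyapunov_hittingRoot_pow {s : ℝ} (hp : ∀ j, 0 ≤ p j) (hp_sum : Summable p)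
    (hp_le : ∑' j, p j ≤ 1) (hp_zero : p 0 = 0) (hs : 0 < s) (hs1 : s ≤ 1) :
    IsLyapunov (Ptrans p) s (Pi.single 0 √(1 - s ^ 2)) (fun j => hittingRoot s ^ j) := by
  have hx := hittingRoot_nonneg hs.le
  have hx1 := hittingRoot_le_one hs.le hs1
  refine ⟨fun l => ?_, fun l => pow_nonneg hx l, fun l => ?_, fun l => ?_⟩
  · exact Pi.single_nonneg (α := fun _ : ℕ => ℝ).2 (Real.sqrt_nonneg _) l
  · cases l with
    | zero => exact summable_mul_pow hp hp_sum hx hx1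
    | succ l => exact (hasSum_Ptrans_succ_mul p _ l).summable
  · cases l with
    | zero =>
      have hjump := mul_le_mul_of_nonneg_left
        (tsum_mul_pow_le hp hp_sum hp_le hp_zero hx hx1) hs.le
      simp only [Ptrans, Pi.single_eq_same, pow_zero]
      linarith [mul_hittingRoot s]
    | succ l =>
      rw [(hasSum_Ptrans_succ_mul p _ l).tsum_eq, Pi.single_eq_of_ne l.succ_ne_zero]
      apply le_of_eq
      linear_combination hittingRoot s ^ l / 2 * mul_one_add_hittingRoot_sq hs hs1

theorem sum_pow_mul_occ_zero_mul_sqrt_le {s : ℝ} (hp : ∀ j, 0 ≤ p j) (hp_sum : Summable p)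
    (hp_le : ∑' j, p j ≤ 1) (hp_zero : p 0 = 0) (hs : 0 < s) (hs1 : s ≤ 1) (i n : ℕ) :
    (∑ k ∈ Finset.range n, s ^ k * occ p i k 0) * √(1 - s ^ 2) ≤ hittingRoot s ^ i := by
  have hinit := hasSum_occ_zero_mul p (fun j => hittingRoot s ^ j) i
  have hcost (k : ℕ) :
      ∑' l, occ p i k l * Pi.single (M := fun _ => ℝ) 0 √(1 - s ^ 2) l =
        occ p i k 0 * √(1 - s ^ 2) := by
    rw [tsum_eq_single 0 fun l hl => by rw [Pi.single_eq_of_ne hl, mul_zero], Pi.single_eq_same]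
  have hlyapunov := isLyapunov_hittingRoot_pow hp hp_sum hp_le hp_zero hs hs1
  have hbound := hlyapunov.sum_pow_mul_tsum_cost_le hs (Ptrans_nonneg hp) (occ_nonneg hp i)
    (fun _ _ => rfl) hinit.summable n
  simpa only [hcost, hinit.tsum_eq, ← mul_assoc, ← Finset.sum_mul] using hbound

end BoundaryWalk

theorem pow_mul_sum_range_le_sum_pow_mul {a : ℕ → ℝ} {s : ℝ} (ha : ∀ k, 0 ≤ a k) (hs : 0 ≤ s)
    (hs1 : s ≤ 1) (n : ℕ) :
    s ^ n * ∑ k ∈ Finset.range n, a k ≤ ∑ k ∈ Finset.range n, s ^ k * a k := by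
  rw [Finset.mul_sum]
  exact Finset.sum_le_sum fun k hk => mul_le_mul_of_nonneg_right
    (pow_le_pow_of_le_one hs hs1 (Finset.mem_range.1 hk).le) (ha k)

/-- If `𝔭₀ = 0`, then for any initial state `i`, the expected time spent at `0`
during the first `m` steps of the boundary random walk started at `i` is at most
`e / √(1 - e^{-2/m})`. -/
theorem stmt10 (p : ℕ → ℝ) (hp0 : ∀ j, 0 ≤ p j) (hpsum : Summable p)
    (hp1 : ∑' j : ℕ, p j ≤ 1) (hp00 : p 0 = 0)
    (i : ℕ) (m : ℕ) (hm : 0 < m) :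
    ∑ k ∈ Finset.range m, occ p i k 0 ≤
      Real.exp 1 / Real.sqrt (1 - Real.exp (-2 / (m : ℝ))) := by
  set s := Real.exp (-1 / m) with hs_def
  have hm_pos : (0 : ℝ) < m := Nat.cast_pos.2 hm
  have hs : 0 < s := Real.exp_pos _
  have hs1 : s < 1 := Real.exp_lt_one_iff.2 (div_neg_of_neg_of_pos neg_one_lt_zero hm_pos)
  have hs_sq : Real.exp (-2 / m) = s ^ 2 := by
    rw [hs_def, ← Real.exp_nat_mul]; congr 1; push_cast; ring
  have hs_pow : s ^ m = Real.exp (-1) := by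
    rw [hs_def, ← Real.exp_nat_mul, mul_div_cancel₀ _ hm_pos.ne']
  have hsqrt : 0 < √(1 - s ^ 2) := Real.sqrt_pos.2 (by nlinarith)
  have hbound : Real.exp (-1) * ((∑ k ∈ Finset.range m, occ p i k 0) * √(1 - s ^ 2)) ≤ 1 :=
    calc Real.exp (-1) * ((∑ k ∈ Finset.range m, occ p i k 0) * √(1 - s ^ 2))
        = s ^ m * (∑ k ∈ Finset.range m, occ p i k 0) * √(1 - s ^ 2) := by
          rw [hs_pow, mul_assoc]
      _ ≤ (∑ k ∈ Finset.range m, s ^ k * occ p i k 0) * √(1 - s ^ 2) := by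
          gcongr
          exact pow_mul_sum_range_le_sum_pow_mul (occ_nonneg hp0 i · 0) hs.le hs1.le m
      _ ≤ hittingRoot s ^ i :=
          sum_pow_mul_occ_zero_mul_sqrt_le hp0 hpsum hp1 hp00 hs hs1.le i m
      _ ≤ 1 := pow_le_one₀ (hittingRoot_nonneg hs.le) (hittingRoot_le_one hs.le hs1.le)
  rw [hs_sq, le_div_iff₀ hsqrt]
  rwa [Real.exp_neg, inv_mul_le_one₀ (Real.exp_pos 1)] at hbound
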